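/- arXiv:1810.02793 — 2 statements merged into one kernel-verified Lean document; each statement's English description precedes it below -/
import Mathlib

section
/- The split octonions form a composition algebra: for all split octonions x and y, N(x·y) = N(x)·N(y). -/
/-- The split octonions, realized via the Cayley–Dickson construction as pairs
of real quaternions. -/
abbrev SplitOctonion : Type := Quaternion ℝ × Quaternion ℝ

/-- Cayley–Dickson multiplication for split octonions:
`(a,b)·(c,d) = (a c + d̄ b, d a + b c̄)`. -/
noncomputable def soMul (x y : SplitOctonion) : SplitOctonion :=
  (x.1 * y.1 + star y.2 * x.2, y.2 * x.1 + x.2 * star y.1)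

/-- The split-octonionic norm: `N (a,b) = ‖a‖² − ‖b‖²` (difference of
quaternionic norm-squares). -/
noncomputable def soN (x : SplitOctonion) : ℝ :=
  Quaternion.normSq x.1 - Quaternion.normSq x.2

/-!
Quaternionic norm-squares are multiplicative and satisfy
`normSq (p + q) = normSq p + normSq q + 2 Re (p q̄)`. Expand the norm of the product of `(a, b)` and
`(c, d)` in the Cayley–Dickson double with parameter `γ`: the products of norm-squares add up to
the product of the two norms, and what is left is the difference of the cross terms
`2γ Re (a c b̄ d)` and `2γ Re (d a c b̄)`. It vanishes because the real part of a product is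
invariant under cyclic permutation of the factors.
-/

section CayleyDickson

open Quaternion (normSq)
open scoped Quaternion

variable {R : Type*} [CommRing R]

/-- The product on the Cayley–Dickson double of the quaternions over `R` with parameter `γ`. Over
`ℝ`, `γ = 1` gives the split octonions and `γ = -1` the octonions. -/
def cayleyDicksonMul (γ : R) (x y : ℍ[R] × ℍ[R]) : ℍ[R] × ℍ[R] :=
  (x.1 * y.1 + γ • (star y.2 * x.2), y.2 * x.1 + x.2 * star y.1)

/-- The norm form of the Cayley–Dickson double of the quaternions over `R` with parameter `γ`,
multiplicative for `cayleyDicksonMul γ`. -/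
def cayleyDicksonNorm (γ : R) (x : ℍ[R] × ℍ[R]) : R :=
  normSq x.1 - γ * normSq x.2

theorem quaternionAlgebra_re_mul_comm {c₁ c₃ : R} (p q : ℍ[R,c₁,c₃]) :
    (p * q).re = (q * p).re := by
  simp only [QuaternionAlgebra.re_mul]
  ring

theorem normSq_cayleyDicksonMul_fst (γ : R) (x y : ℍ[R] × ℍ[R]) :
    normSq (cayleyDicksonMul γ x y).1 =
      normSq x.1 * normSq y.1 + γ ^ 2 * (normSq x.2 * normSq y.2) +
        2 * γ * (x.1 * y.1 * star x.2 * y.2).re := by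
  have cross_term : (x.1 * y.1 * star (γ • (star y.2 * x.2))).re =
      γ * (x.1 * y.1 * star x.2 * y.2).re := by
    simp only [Quaternion.star_smul, star_mul, star_star, mul_smul_comm, Quaternion.re_smul,
      smul_eq_mul, mul_assoc]
  simp only [cayleyDicksonMul, Quaternion.normSq_add, cross_term, Quaternion.normSq_smul, map_mul,
    Quaternion.normSq_star]
  ring

theorem normSq_cayleyDicksonMul_snd (γ : R) (x y : ℍ[R] × ℍ[R]) :
    normSq (cayleyDicksonMul γ x y).2 =
      normSq x.1 * normSq y.2 + normSq x.2 * normSq y.1 +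
        2 * (x.1 * y.1 * star x.2 * y.2).re := by
  have cross_term : (y.2 * x.1 * star (x.2 * star y.1)).re = (x.1 * y.1 * star x.2 * y.2).re :=
    calc (y.2 * x.1 * star (x.2 * star y.1)).re
        = (y.2 * (x.1 * y.1 * star x.2)).re := by simp only [star_mul, star_star, mul_assoc]
      _ = (x.1 * y.1 * star x.2 * y.2).re := quaternionAlgebra_re_mul_comm _ _
  simp only [cayleyDicksonMul, Quaternion.normSq_add, cross_term, map_mul, Quaternion.normSq_star]
  ring

theorem splitOctonion_norm_mul_general (γ : R) (x y : ℍ[R] × ℍ[R]) :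
    cayleyDicksonNorm γ (cayleyDicksonMul γ x y) =
      cayleyDicksonNorm γ x * cayleyDicksonNorm γ y := by
  simp only [cayleyDicksonNorm, normSq_cayleyDicksonMul_fst, normSq_cayleyDicksonMul_snd]
  ring

end CayleyDickson

/-- The split octonions form a composition algebra: `N(x·y) = N(x)·N(y)`. -/
theorem splitOctonion_norm_mul (x y : SplitOctonion) :
    soN (soMul x y) = soN x * soN y := by
  simpa only [soN, soMul, cayleyDicksonNorm, cayleyDicksonMul, one_mul, one_smul] using
    splitOctonion_norm_mul_general 1 x y
end

section
/- Right multiplication by a unit octonion parallelizes the 7-sphere: let x be an octonion with N(x) = 1. Then for the seven imaginary units e₁,…,e₇ and all i, j ∈ {1,…,7}: B(eᵢ·x, x) = 0 and B(eᵢ·x, eⱼ·x) = δᵢⱼ; consequently {x, e₁·x, …, e₇·x} is an orthonormal basis of the octonions viewed as the 8-dimensional real inner product space with quadratic form N. -/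
/-- The octonions, realized via the Cayley–Dickson construction as pairs of
real quaternions. -/
abbrev Octonion : Type := Quaternion ℝ × Quaternion ℝ

/-- Cayley–Dickson multiplication: `(a,b)·(c,d) = (a c − d̄ b, d a + b c̄)`. -/
noncomputable def octMul (x y : Octonion) : Octonion :=
  (x.1 * y.1 - star y.2 * x.2, y.2 * x.1 + x.2 * star y.1)

/-- The octonionic norm: `N (a,b) = ‖a‖² + ‖b‖²` (sum of quaternionic
norm-squares). -/
noncomputable def octN (x : Octonion) : ℝ :=
  Quaternion.normSq x.1 + Quaternion.normSq x.2

/-- The bilinear form associated with the octonionic norm. -/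
noncomputable def octB (u v : Octonion) : ℝ :=
  (octN (u + v) - octN u - octN v) / 2

/-- The seven imaginary units of the octonions:
`e₁ = (i,0)`, `e₂ = (j,0)`, `e₃ = (k,0)`, `e₄ = (0,1)`, `e₅ = (0,i)`,
`e₆ = (0,j)`, `e₇ = (0,k)`. -/
noncomputable def octUnit : Fin 7 → Octonion :=
  ![((⟨0, 1, 0, 0⟩ : Quaternion ℝ), 0),
    ((⟨0, 0, 1, 0⟩ : Quaternion ℝ), 0),
    ((⟨0, 0, 0, 1⟩ : Quaternion ℝ), 0),
    (0, 1),
    (0, (⟨0, 1, 0, 0⟩ : Quaternion ℝ)),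
    (0, (⟨0, 0, 1, 0⟩ : Quaternion ℝ)),
    (0, (⟨0, 0, 0, 1⟩ : Quaternion ℝ))]

/-!
The octonion norm is multiplicative: the cross terms in the norms of the two quaternionic components
of a product cancel, because the real part of a product of quaternions is invariant under cyclic
permutation of the factors. Since octonion multiplication is additive in its left factor, polarizing
`N (a · x) = N a * N x` in `a` gives `B (a · x) (b · x) = B a b * N x`. Right multiplication by `x`
thus scales `B` by `N x`, and it carries the orthonormal family `1, e₁, …, e₇` to
`x, e₁ · x, …, e₇ · x`.
-/

open scoped Quaternion

theorem quaternion_re_mul_comm {R : Type*} [CommRing R] (a b : ℍ[R]) :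
    (a * b).re = (b * a).re := by
  simp only [Quaternion.re_mul]
  ring

theorem octN_octMul (x y : Octonion) : octN (octMul x y) = octN x * octN y := by
  obtain ⟨a, b⟩ := x
  obtain ⟨c, d⟩ := y
  have cross : (a * c * star (star d * b)).re = (d * a * star (b * star c)).re := by
    simpa only [star_mul, star_star, mul_assoc] using quaternion_re_mul_comm (a * c * star b) d
  simp only [octMul, octN, sub_eq_add_neg, Quaternion.normSq_add, Quaternion.normSq_neg,
    Quaternion.normSq_star, map_mul, star_neg, mul_neg, Quaternion.re_neg, cross]
  ring

theorem octMul_add_left (a b x : Octonion) : octMul (a + b) x = octMul a x + octMul b x := by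
  ext1 <;> simp only [octMul, Prod.fst_add, Prod.snd_add, add_mul, mul_add] <;> abel

theorem octB_octMul_octMul_right (a b x : Octonion) :
    octB (octMul a x) (octMul b x) = octB a b * octN x := by
  simp only [octB, ← octMul_add_left, octN_octMul]
  ring

theorem octN_eq_norm_sq (u : Octonion) : octN u = ‖WithLp.toLp 2 u‖ ^ 2 := by
  rw [WithLp.prod_norm_sq_eq_of_L2, octN, Quaternion.normSq_eq_norm_mul_self,
    Quaternion.normSq_eq_norm_mul_self, sq, sq, WithLp.toLp_fst, WithLp.toLp_snd]

theorem octB_eq_inner (u v : Octonion) :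
    octB u v = inner ℝ (WithLp.toLp 2 u) (WithLp.toLp 2 v) := by
  simp only [octB, octN_eq_norm_sq, WithLp.toLp_add, norm_add_sq_real]
  ring

theorem octB_eq_coord (u v : Octonion) : octB u v =
    u.1.re * v.1.re + u.1.imI * v.1.imI + u.1.imJ * v.1.imJ + u.1.imK * v.1.imK +
    (u.2.re * v.2.re + u.2.imI * v.2.imI + u.2.imJ * v.2.imJ + u.2.imK * v.2.imK) := by
  rw [octB_eq_inner, WithLp.prod_inner_apply, Quaternion.inner_def, Quaternion.inner_def]
  simp [Quaternion.re_mul]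

theorem octB_self (u : Octonion) : octB u u = octN u := by
  rw [octB_eq_inner, real_inner_self_eq_norm_sq, octN_eq_norm_sq]

theorem octN_eq_zero {u : Octonion} : octN u = 0 ↔ u = 0 := by
  rw [octN_eq_norm_sq, sq_eq_zero_iff, norm_eq_zero, WithLp.toLp_eq_zero]

theorem linearIndependent_of_octB_eq_zero {ι : Type*} {v : ι → Octonion}
    (hne : ∀ i, v i ≠ 0) (horth : Pairwise fun i j ↦ octB (v i) (v j) = 0) :
    LinearIndependent ℝ v := by
  have hL2 : LinearIndependent ℝ fun i ↦ WithLp.toLp 2 (v i) :=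
    linearIndependent_of_ne_zero_of_inner_eq_zero (fun i ↦ (WithLp.toLp_eq_zero 2).not.2 (hne i))
      fun i j hij ↦ (octB_eq_inner (v i) (v j)).symm.trans (horth hij)
  exact hL2.map' (WithLp.linearEquiv 2 ℝ Octonion).toLinearMap (LinearEquiv.ker _)

theorem finrank_octonion : Module.finrank ℝ Octonion = 8 := by
  rw [Module.finrank_prod, Quaternion.finrank_eq_four]

/-- The unit of the octonions. It is not the numeral `1 : Octonion`, which is the unit `(1, 1)` of
the product ring. -/
noncomputable def octOne : Octonion := (1, 0)

theorem octMul_octOne_left (x : Octonion) : octMul octOne x = x := by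
  simp [octMul, octOne]

/-- The standard orthonormal family `1, e₁, …, e₇` of the octonions, with the unit at index `0`. -/
noncomputable def octStd : Fin 8 → Octonion := Fin.cons octOne octUnit

theorem octB_octStd (i j : Fin 8) : octB (octStd i) (octStd j) = if i = j then 1 else 0 := by
  rw [octB_eq_coord]
  fin_cases i <;> fin_cases j <;> simp [octStd, octOne, octUnit]

theorem octB_octStd_octMul (x : Octonion) (i j : Fin 8) :
    octB (octMul (octStd i) x) (octMul (octStd j) x) = if i = j then octN x else 0 := by
  rw [octB_octMul_octMul_right, octB_octStd, ite_mul, one_mul, zero_mul]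

theorem span_range_octStd_octMul {x : Octonion} (hx : x ≠ 0) :
    Submodule.span ℝ (Set.range fun i ↦ octMul (octStd i) x) = ⊤ := by
  have hne (i : Fin 8) : octMul (octStd i) x ≠ 0 := by
    rwa [← octN_eq_zero.ne, ← octB_self, octB_octStd_octMul, if_pos rfl, octN_eq_zero.ne]
  have horth : Pairwise fun i j ↦ octB (octMul (octStd i) x) (octMul (octStd j) x) = 0 :=
    fun i j hij ↦ (octB_octStd_octMul x i j).trans (if_neg hij)
  apply (linearIndependent_of_octB_eq_zero hne horth).span_eq_top_of_card_eq_finrank'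
  rw [Fintype.card_fin, finrank_octonion]

theorem octonion_parallelization_general (x : Octonion) (v : Fin 8 → Octonion) (hv0 : v 0 = x)
    (hvs : ∀ i : Fin 7, v i.succ = octMul (octUnit i) x) :
    ((∀ i : Fin 7, octB (octMul (octUnit i) x) x = 0) ∧
     (∀ i j : Fin 7, octB (octMul (octUnit i) x) (octMul (octUnit j) x) =
        if i = j then octN x else 0)) ∧
    (∀ i j : Fin 8, octB (v i) (v j) = if i = j then octN x else 0) ∧
    (x ≠ 0 → Submodule.span ℝ (Set.range v) = ⊤) := by
  have hv : v = fun i ↦ octMul (octStd i) x :=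
    funext <| Fin.cases (hv0.trans (octMul_octOne_left x).symm) hvs
  have hgram (i j : Fin 8) : octB (v i) (v j) = if i = j then octN x else 0 := by
    rw [hv, octB_octStd_octMul]
  refine ⟨⟨fun i ↦ ?_, fun i j ↦ ?_⟩, hgram, fun hx ↦ hv ▸ span_range_octStd_octMul hx⟩
  · simpa only [hvs, hv0, Fin.succ_ne_zero, if_false] using hgram i.succ 0
  · simpa only [hvs, Fin.succ_inj] using hgram i.succ j.succ

/-- Right multiplication by a unit octonion parallelizes the 7-sphere: if
`N(x) = 1`, the seven vectors `eᵢ·x` are orthogonal to `x` and orthonormal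
among themselves; consequently `{x, e₁·x, …, e₇·x}` is an orthonormal basis of
the octonions viewed as the 8-dimensional real inner product space with
quadratic form `N`. -/
theorem octonion_parallelization (x : Octonion) (hx : octN x = 1)
    (v : Fin 8 → Octonion) (hv0 : v 0 = x)
    (hvs : ∀ i : Fin 7, v i.succ = octMul (octUnit i) x) :
    ((∀ i : Fin 7, octB (octMul (octUnit i) x) x = 0) ∧
     (∀ i j : Fin 7, octB (octMul (octUnit i) x) (octMul (octUnit j) x) =
        if i = j then 1 else 0)) ∧
    (∀ i j : Fin 8, octB (v i) (v j) = if i = j then 1 else 0) ∧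
    Submodule.span ℝ (Set.range v) = ⊤ := by
  have hx0 : x ≠ 0 := octN_eq_zero.ne.1 (hx ▸ one_ne_zero)
  simpa only [hx, hx0, ne_eq, not_false_eq_true, true_imp_iff] using
    octonion_parallelization_general x v hv0 hvs
end
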